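/- Let C be a connected strongly graded k-coalgebra. Then C is quadratic if and only if Ext_C^{2,m}(k,k) = 0 for all m ≥ 3. -/

import Mathlib

/-!
Put `V = C₁` and `K = Im Δ_{1,1} ⊆ V ⊗ V`. The left `V`-component `C → V ⊗ C` of the
comultiplication, followed by `V ⊗ C → V ⊗ V ⊗ C → ((V ⊗ V) ⧸ K) ⊗ C`, is the beginning of a
minimal cofree resolution of `k`; it is always exact at `V ⊗ Cₙ` for `n ≤ 1`, and both conditions
of the theorem say that it is exact there for all `n ≥ 2`.

Strong grading makes `Δ(m)` injective on `Cₘ`, so exactness at `V ⊗ Cₙ` becomes, after embedding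
`Cₙ` into `V^{⊗n}`, the equality of `Im Δ(n+1)` with the intersection of `K ⊗ V^{⊗(n-1)}` and
`V ⊗ Im Δ(n)`; induction on `n` identifies this with being quadratic.

A 2-cocycle of the cobar complex is a coboundary as soon as its component in `V ⊗ C` is one, by
injectivity of `Δ_{1,n}`. That component is killed by the second map of the resolution, so exactness
makes it a coboundary. Conversely, an element of the kernel at `V ⊗ Cₙ` is completed to a 2-cocycle
by lifting its right comultiplication through `C → V ⊗ C` one homogeneous component at a time, which
uses exactness in lower degrees only.
-/

open TensorProduct

noncomputable section
namespace Koszul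

variable (k : Type) [Field k]

/-- Iterated tensor powers: `TP V 0 = k`, `TP V 1 = V`, `TP V (n+2) = V ⊗ TP V (n+1)`. -/
def TP (V : Type) [AddCommGroup V] [Module k V] : ℕ → ModuleCat k
  | 0 => ModuleCat.of k k
  | 1 => ModuleCat.of k V
  | (n+2) => ModuleCat.of k (V ⊗[k] (TP V (n+1)))

variable (C : Type) [AddCommGroup C] [Module k C] [Coalgebra k C]
variable (𝒞 : ℕ → Submodule k C)

/-- The data exhibiting `C = ⊕ₙ Cₙ` as a connected graded coalgebra: a grouplike element `g`
spanning `C₀`, the counit vanishing in positive degrees, and the components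
`Δc p q : C_{p+q} → C_p ⊗ C_q` of the comultiplication (extended by `0` to the other
homogeneous components of `C`). -/
structure GradedCoalgebraData where
  g : C
  Δc : ∀ p q : ℕ, C →ₗ[k] (↥(𝒞 p) ⊗[k] ↥(𝒞 q))
  hC0 : 𝒞 0 = Submodule.span k {g}
  hgrp : Coalgebra.comul (R := k) g = g ⊗ₜ[k] g
  hcu : Coalgebra.counit (R := k) g = 1
  hcounit : ∀ n, 1 ≤ n → ∀ x ∈ 𝒞 n, Coalgebra.counit (R := k) x = 0
  hΔc : ∀ n, ∀ x ∈ 𝒞 n, Coalgebra.comul (R := k) x =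
    ∑ p ∈ Finset.range (n+1),
      (TensorProduct.map (𝒞 p).subtype (𝒞 (n-p)).subtype) (Δc p (n-p) x)
  hΔc0 : ∀ p q n, n ≠ p + q → ∀ x ∈ 𝒞 n, Δc p q x = 0

/-- `C` is strongly graded: every component `Δ_{p,q} : C_{p+q} → C_p ⊗ C_q` is injective. -/
def GradedCoalgebraData.Strong (D : GradedCoalgebraData k C 𝒞) : Prop :=
  ∀ p q : ℕ, ∀ x ∈ 𝒞 (p + q), D.Δc p q x = 0 → x = 0

/-- `Δ₊ : x ↦ Δ(x) - g ⊗ x - x ⊗ g`, the reduced comultiplication; on a homogeneous element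
of positive degree `n` it equals the sum of the components `Δ_{p,q}` with `p, q ≥ 1`. -/
def deltaPlus (g : C) : C →ₗ[k] C ⊗[k] C :=
  Coalgebra.comul - (TensorProduct.mk k C C g) - ((TensorProduct.mk k C C).flip g)

/-- `expand Δp n i` applies `Δp` to the `(i+1)`-st tensor factor of `C^{⊗(n+1)}`. -/
def expand (Δp : C →ₗ[k] C ⊗[k] C) : (n i : ℕ) → (↥(TP k C (n+1)) →ₗ[k] ↥(TP k C (n+2)))
  | 0, 0 => Δp
  | 0, (_+1) => 0
  | (n+1), 0 => (TensorProduct.assoc k C C ↥(TP k C (n+1))).toLinearMap.comp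
      (LinearMap.rTensor ↥(TP k C (n+1)) Δp)
  | (n+1), (i+1) => LinearMap.lTensor C (expand Δp n i)

/-- The differential `dⁿ = Σ_{i=1}^{n} (-1)^{i-1} id ⊗ ⋯ ⊗ Δ₊ ⊗ ⋯ ⊗ id` of the normalized
cobar complex (with `d⁰ = 0`). -/
def cobarD (Δp : C →ₗ[k] C ⊗[k] C) : (n : ℕ) → (↥(TP k C n) →ₗ[k] ↥(TP k C (n+1)))
  | 0 => 0
  | (n+1) => ∑ i ∈ Finset.range (n+1), ((-1:k)^i) • expand k C Δp n i

/-- `omega 𝒱 n m = ⊕_{𝐦 ∈ 𝒫ₙ(m)} V_{m₁} ⊗ ⋯ ⊗ V_{mₙ}`: the span, inside the `n`-th tensor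
power, of tensors of homogeneous elements of positive degrees summing to `m`. -/
def omega {V : Type} [AddCommGroup V] [Module k V] (𝒱 : ℕ → Submodule k V) :
    (n m : ℕ) → Submodule k ↥(TP k V n)
  | 0, m => if m = 0 then ⊤ else ⊥
  | 1, m => if m = 0 then ⊥ else 𝒱 m
  | (n+2), m => ⨆ p ∈ Finset.Icc 1 m,
      LinearMap.range (TensorProduct.map (𝒱 p).subtype (omega 𝒱 (n+1) (m-p)).subtype)

/-- `Ext_C^{n,m}(k,k) = Ker dⁿ_m / Im dⁿ⁻¹_m`, computed from the degree-`m` part of the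
normalized cobar complex of `C` (for `n = 0` there is nothing to quotient by). -/
abbrev ExtGrp (Δp : C →ₗ[k] C ⊗[k] C) : (n m : ℕ) → Type
  | 0, m => ↥(LinearMap.ker (cobarD k C Δp 0) ⊓ omega k 𝒞 0 m)
  | (n+1), m =>
      ↥(LinearMap.ker (cobarD k C Δp (n+1)) ⊓ omega k 𝒞 (n+1) m) ⧸
        (Submodule.comap (LinearMap.ker (cobarD k C Δp (n+1)) ⊓ omega k 𝒞 (n+1) m).subtype
          (Submodule.map (cobarD k C Δp n) (omega k 𝒞 n m)))

/-- The subspace `V^{⊗i} ⊗ K ⊗ V^{⊗(n-i)}` of `V^{⊗(n+2)}` (the subspace `K ⊆ V ⊗ V`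
inserted at the `(i+1)`-st position). -/
def insertK {V : Type} [AddCommGroup V] [Module k V] (K : Submodule k (V ⊗[k] V)) :
    (n i : ℕ) → Submodule k ↥(TP k V (n+2))
  | 0, 0 => K
  | 0, (_+1) => ⊥
  | (n+1), 0 => Submodule.map (TensorProduct.assoc k V V ↥(TP k V (n+1))).toLinearMap
      (LinearMap.range (TensorProduct.map K.subtype (LinearMap.id (M := ↥(TP k V (n+1))))))
  | (n+1), (i+1) =>
      LinearMap.range (TensorProduct.map (LinearMap.id (M := V)) (insertK K n i).subtype)

variable [DirectSum.Decomposition 𝒞]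

/-- The iterated comultiplication `Δ(m) : Cₘ → C₁^{⊗m}`, with `Δ(1) = id` (realized on all
of `C` via the projection onto `C₁`) and `Δ(m) = (id ⊗ Δ(m-1)) ∘ Δ_{1,m-1}`. -/
def deltaIter (D : GradedCoalgebraData k C 𝒞) : (m : ℕ) → (C →ₗ[k] ↥(TP k ↥(𝒞 1) m))
  | 0 => 0
  | 1 => (DirectSum.component k ℕ (fun i => ↥(𝒞 i)) 1).comp
      (DirectSum.decomposeLinearEquiv 𝒞).toLinearMap
  | (n+2) => (TensorProduct.map LinearMap.id ((deltaIter D (n+1)).comp (𝒞 (n+1)).subtype)).comp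
      (D.Δc 1 (n+1))

/-- `C̃_m = ⋂_{p=1}^{m-1} C₁^{⊗(p-1)} ⊗ Im Δ_{1,1} ⊗ C₁^{⊗(m-p-1)}` for `m = j+2`. -/
def Ctilde (D : GradedCoalgebraData k C 𝒞) (j : ℕ) : Submodule k ↥(TP k ↥(𝒞 1) (j+2)) :=
  ⨅ i ∈ Finset.range (j+1), insertK k (Submodule.map (D.Δc 1 1) (𝒞 2)) j i

/-- `C` is *quadratic*: for every `m = j+2 ≥ 2` the iterated comultiplication
`Δ(m) : Cₘ → C₁^{⊗m}` is injective with image `C̃_m`. -/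
def CoalgQuadratic (D : GradedCoalgebraData k C 𝒞) : Prop :=
  ∀ j : ℕ, (∀ x ∈ 𝒞 (j+2), deltaIter k C 𝒞 D (j+2) x = 0 → x = 0) ∧
    Submodule.map (deltaIter k C 𝒞 D (j+2)) (𝒞 (j+2)) = Ctilde k C 𝒞 D j

section LinearAlgebra

variable {R A B E F : Type*} [CommRing R] [AddCommGroup A] [Module R A] [AddCommGroup B]
  [Module R B] [AddCommGroup E] [Module R E] [AddCommGroup F] [Module R F]
  (M : Type*) [AddCommGroup M] [Module R M]

lemma ker_lTensor_le_ker_lTensor [Module.Flat R M] {f : A →ₗ[R] B} {f' : A →ₗ[R] E}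
    (h : LinearMap.ker f ≤ LinearMap.ker f') :
    LinearMap.ker (f.lTensor M) ≤ LinearMap.ker (f'.lTensor M) := by
  have hexact := Module.Flat.lTensor_exact M (LinearMap.exact_subtype_ker_map f)
  rw [LinearMap.exact_iff.1 hexact, LinearMap.range_le_ker_iff, ← LinearMap.lTensor_comp,
    LinearMap.range_le_ker_iff.1 ((Submodule.range_subtype _).trans_le h), LinearMap.lTensor_zero]

lemma ker_lTensor_congr [Module.Flat R M] {f : A →ₗ[R] B} {f' : A →ₗ[R] E}
    (h : LinearMap.ker f = LinearMap.ker f') :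
    LinearMap.ker (f.lTensor M) = LinearMap.ker (f'.lTensor M) :=
  (ker_lTensor_le_ker_lTensor M h.le).antisymm (ker_lTensor_le_ker_lTensor M h.ge)

lemma ker_rTensor_le_comap_range_rTensor [Module.Flat R M] {f : A →ₗ[R] B} {p : A →ₗ[R] E}
    {e : F →ₗ[R] E} (h : LinearMap.ker f ≤ (LinearMap.range e).comap p) :
    LinearMap.ker (f.rTensor M) ≤ (LinearMap.range (e.rTensor M)).comap (p.rTensor M) := by
  have hexact := Module.Flat.rTensor_exact M (LinearMap.exact_subtype_ker_map f)
  rw [LinearMap.exact_iff.1 hexact]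
  rintro _ ⟨t, rfl⟩
  induction t with
  | zero => simp
  | add t s ht hs => simpa only [map_add] using add_mem ht hs
  | tmul a x =>
    obtain ⟨c, hc⟩ := h a.2
    exact ⟨c ⊗ₜ x, by simp [hc]⟩

lemma ker_rTensor_le_ker_rTensor [Module.Flat R M] {f : A →ₗ[R] B} {f' : A →ₗ[R] E}
    (h : LinearMap.ker f ≤ LinearMap.ker f') :
    LinearMap.ker (f.rTensor M) ≤ LinearMap.ker (f'.rTensor M) := by
  have := ker_rTensor_le_comap_range_rTensor M (p := f') (e := (0 : A →ₗ[R] E)) (by simpa using h)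
  simpa using this

lemma rTensor_lTensor_comm (f : A →ₗ[R] B) (g : E →ₗ[R] F) (z : A ⊗[R] E) :
    f.rTensor F (g.lTensor A z) = g.lTensor B (f.rTensor E z) := by
  rw [← LinearMap.comp_apply, ← LinearMap.comp_apply, LinearMap.rTensor_comp_lTensor,
    LinearMap.lTensor_comp_rTensor]

lemma assoc_rTensor_rTensor (f : A →ₗ[R] B) (z : (A ⊗[R] E) ⊗[R] F) :
    TensorProduct.assoc R B E F ((f.rTensor E).rTensor F z) =
      f.rTensor (E ⊗[R] F) (TensorProduct.assoc R A E F z) := by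
  simp [LinearMap.rTensor_tensor]

lemma assoc_lTensor_rTensor (f : E →ₗ[R] B) (z : (A ⊗[R] E) ⊗[R] F) :
    TensorProduct.assoc R A B F ((f.lTensor A).rTensor F z) =
      (f.rTensor F).lTensor A (TensorProduct.assoc R A E F z) :=
  (LinearMap.congr_fun (LinearMap.lTensor_rTensor_comp_assoc ..) z).symm

lemma mem_range_rTensor_subtype_iff (S : Submodule R A) (z : A ⊗[R] M) :
    z ∈ LinearMap.range (S.subtype.rTensor M) ↔ S.mkQ.rTensor M z = 0 := by
  rw [← LinearMap.exact_iff.1 (rTensor_exact M (LinearMap.exact_subtype_mkQ S) S.mkQ_surjective),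
    LinearMap.mem_ker]

lemma mem_range_lTensor_subtype_iff {ι : Type*} (b : Module.Basis ι R M) (S : Submodule R A)
    (z : M ⊗[R] A) : z ∈ LinearMap.range (S.subtype.lTensor M) ↔
      ∀ i, TensorProduct.lid R A ((b.coord i).rTensor A z) ∈ S := by
  classical
  have hexact := lTensor_exact M (LinearMap.exact_subtype_mkQ S) S.mkQ_surjective
  rw [← LinearMap.exact_iff.1 hexact, LinearMap.mem_ker,
    ← (equivFinsuppOfBasisLeft (N := A ⧸ S) b).map_eq_zero_iff, DFunLike.ext_iff]
  refine forall_congr' fun i => ?_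
  have hnat : TensorProduct.lid R (A ⧸ S) ((b.coord i).rTensor _ (S.mkQ.lTensor M z)) =
      S.mkQ (TensorProduct.lid R A ((b.coord i).rTensor A z)) := by
    induction z <;> simp_all
  rw [equivFinsuppOfBasisLeft_apply, hnat, Finsupp.zero_apply, ← LinearMap.mem_ker,
    Submodule.ker_mkQ]

lemma range_lTensor_subtype_iInf [Module.Free R M] {ι : Sort*} (S : ι → Submodule R A) :
    LinearMap.range ((⨅ i, S i).subtype.lTensor M) =
      ⨅ i, LinearMap.range ((S i).subtype.lTensor M) := by
  ext z
  let b := Module.Free.chooseBasis R M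
  simp only [mem_range_lTensor_subtype_iff M b, Submodule.mem_iInf]
  exact forall_comm

end LinearAlgebra

section Decomposition

variable {R V : Type*} [CommRing R] [AddCommGroup V] [Module R V] (𝒱 : ℕ → Submodule R V)
  [DirectSum.Decomposition 𝒱]

/-- The projection of a graded module onto its degree `n` component. -/
def component (n : ℕ) : V →ₗ[R] ↥(𝒱 n) :=
  DirectSum.component R ℕ (fun i => ↥(𝒱 i)) n ∘ₗ (DirectSum.decomposeLinearEquiv 𝒱).toLinearMap

/-- The projection of a graded module onto its degree `n` component, as an endomorphism. -/
def proj (n : ℕ) : V →ₗ[R] V := (𝒱 n).subtype ∘ₗ component 𝒱 n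

variable {𝒱}

lemma proj_mem (n : ℕ) (x : V) : proj 𝒱 n x ∈ 𝒱 n := (component 𝒱 n x).2

lemma proj_of_mem {n : ℕ} {x : V} (hx : x ∈ 𝒱 n) : proj 𝒱 n x = x :=
  DirectSum.decompose_of_mem_same 𝒱 hx

lemma component_of_mem_of_ne {m n : ℕ} (hmn : m ≠ n) {x : V} (hx : x ∈ 𝒱 m) :
    component 𝒱 n x = 0 :=
  Subtype.ext (DirectSum.decompose_of_mem_ne 𝒱 hx hmn)

lemma proj_of_mem_of_ne {m n : ℕ} (hmn : m ≠ n) {x : V} (hx : x ∈ 𝒱 m) : proj 𝒱 n x = 0 :=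
  DirectSum.decompose_of_mem_ne 𝒱 hx hmn

lemma component_comp_subtype (n : ℕ) : component 𝒱 n ∘ₗ (𝒱 n).subtype = LinearMap.id :=
  LinearMap.ext fun x => Subtype.ext (proj_of_mem x.2)

lemma component_comp_subtype_of_ne {m n : ℕ} (hmn : m ≠ n) :
    component 𝒱 n ∘ₗ (𝒱 m).subtype = 0 := by
  ext x : 1
  simpa using component_of_mem_of_ne hmn x.2

lemma component_comp_proj (n : ℕ) : component 𝒱 n ∘ₗ proj 𝒱 n = component 𝒱 n :=
  LinearMap.ext fun x => Subtype.ext (proj_of_mem (proj_mem n x))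

lemma component_comp_proj_of_ne {m n : ℕ} (hmn : m ≠ n) : component 𝒱 n ∘ₗ proj 𝒱 m = 0 :=
  LinearMap.ext fun x => component_of_mem_of_ne hmn (proj_mem m x)

lemma proj_comp_proj (n : ℕ) : proj 𝒱 n ∘ₗ proj 𝒱 n = proj 𝒱 n :=
  LinearMap.ext fun x => proj_of_mem (proj_mem n x)

lemma eq_zero_of_proj_eq_zero {x : V} (h : ∀ n, proj 𝒱 n x = 0) : x = 0 :=
  (DirectSum.decomposeLinearEquiv (R := R) 𝒱).map_eq_zero_iff.1
    (DFinsupp.ext fun n => Subtype.ext (h n))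

end Decomposition

section Comultiplication

variable {k C 𝒞}

lemma GradedCoalgebraData.g_mem {𝒱 : ℕ → Submodule k C} (D : GradedCoalgebraData k C 𝒱) :
    D.g ∈ 𝒱 0 :=
  D.hC0.ge (Submodule.mem_span_singleton_self _)

lemma GradedCoalgebraData.Δc_eq_map_component (D : GradedCoalgebraData k C 𝒞) (p q : ℕ) :
    D.Δc p q = map (component 𝒞 p) (component 𝒞 q) ∘ₗ Coalgebra.comul := by
  refine DirectSum.decompose_lhom_ext 𝒞 fun n => LinearMap.ext fun x => ?_
  have hsplit : ∀ i j, map (component 𝒞 p) (component 𝒞 q)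
      (map (𝒞 i).subtype (𝒞 j).subtype (D.Δc i j x)) =
        if i = p ∧ j = q then D.Δc p q x else 0 := by
    intro i j
    rw [map_map]
    split_ifs with h
    · obtain ⟨rfl, rfl⟩ := h
      simp [component_comp_subtype]
    · obtain h | h : i ≠ p ∨ j ≠ q := by omega
      all_goals simp [component_comp_subtype_of_ne h]
  simp only [LinearMap.comp_apply, Submodule.subtype_apply, D.hΔc n x x.2, map_sum, hsplit]
  by_cases hn : n = p + q
  · rw [Finset.sum_eq_single p] <;> grind
  · rw [D.hΔc0 p q n hn x x.2, Finset.sum_eq_zero]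
    grind

lemma GradedCoalgebraData.comul_proj (D : GradedCoalgebraData k C 𝒞) (n : ℕ) (x : C) :
    Coalgebra.comul (R := k) (proj 𝒞 n x) =
      ∑ p ∈ Finset.range (n + 1), map (proj 𝒞 p) (proj 𝒞 (n - p)) (Coalgebra.comul (R := k) x) := by
  suffices Coalgebra.comul ∘ₗ proj 𝒞 n =
      (∑ p ∈ Finset.range (n + 1), map (proj 𝒞 p) (proj 𝒞 (n - p))) ∘ₗ Coalgebra.comul by
    simpa using LinearMap.congr_fun this x
  have hsplit : ∀ p q (y : C), map (proj 𝒞 p) (proj 𝒞 q) (Coalgebra.comul (R := k) y) =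
      map (𝒞 p).subtype (𝒞 q).subtype (D.Δc p q y) := fun p q y => by
    rw [D.Δc_eq_map_component, LinearMap.comp_apply, map_map]; rfl
  refine DirectSum.decompose_lhom_ext 𝒞 fun m => LinearMap.ext fun x => ?_
  simp only [LinearMap.comp_apply, Submodule.subtype_apply, LinearMap.sum_apply, hsplit]
  obtain rfl | hmn := eq_or_ne m n
  · rw [proj_of_mem x.2, D.hΔc m x x.2]
  · rw [proj_of_mem_of_ne hmn x.2, map_zero, Finset.sum_eq_zero]
    intro p hp
    rw [D.hΔc0 p (n - p) m (by grind) x x.2, map_zero]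

lemma GradedCoalgebraData.proj_zero_apply (D : GradedCoalgebraData k C 𝒞) (x : C) :
    proj 𝒞 0 x = Coalgebra.counit (R := k) x • D.g := by
  suffices proj 𝒞 0 = (Coalgebra.counit (R := k)).smulRight D.g from LinearMap.congr_fun this x
  refine DirectSum.decompose_lhom_ext 𝒞 fun n => LinearMap.ext fun y => ?_
  obtain rfl | hn := eq_or_ne n 0
  · obtain ⟨c, hc⟩ := Submodule.mem_span_singleton.1 (D.hC0.le y.2)
    simp [← hc, D.hcu, proj_of_mem D.g_mem]
  · simp [proj_of_mem_of_ne hn y.2, D.hcounit n (Nat.one_le_iff_ne_zero.2 hn) y y.2]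

lemma GradedCoalgebraData.component_succ_g (D : GradedCoalgebraData k C 𝒞) (n : ℕ) :
    component 𝒞 (n + 1) D.g = 0 :=
  component_of_mem_of_ne n.succ_ne_zero.symm D.g_mem

end Comultiplication

section RightReducedCobar

variable {R A M : Type*} [CommRing R] [AddCommGroup A] [Module R A] [Coalgebra R A]
  [AddCommGroup M] [Module R M]

variable (R) in
/-- The comultiplication reduced on the right only, `x ↦ Δ(x) - x ⊗ g`. -/
def rightComul (g : A) : A →ₗ[R] A ⊗[R] A :=
  Coalgebra.comul - (TensorProduct.mk R A A).flip g

variable (R) in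
/-- The differential following `rightComul R g` in the cobar complex of `A` with coefficients in
the right comodule `A` and in the trivial left comodule spanned by `g`. -/
def rightCobar (g : A) : A ⊗[R] A →ₗ[R] A ⊗[R] (A ⊗[R] A) :=
  (TensorProduct.assoc R A A A).toLinearMap ∘ₗ Coalgebra.comul.rTensor A -
    (rightComul R g).lTensor A

lemma rightComul_apply (g x : A) : rightComul R g x = Coalgebra.comul x - x ⊗ₜ g := rfl

lemma rightComul_self {g : A} (hg : Coalgebra.comul g = g ⊗ₜ[R] g) : rightComul R g g = 0 := by
  rw [rightComul_apply, hg, sub_self]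

lemma rightCobar_apply (g : A) (z : A ⊗[R] A) : rightCobar R g z =
    TensorProduct.assoc R A A A (Coalgebra.comul.rTensor A z) - (rightComul R g).lTensor A z := rfl

lemma assoc_rTensor_comul (f : A →ₗ[R] M) (x : A) :
    TensorProduct.assoc R M A A ((f.rTensor A ∘ₗ Coalgebra.comul).rTensor A (Coalgebra.comul x)) =
      Coalgebra.comul.lTensor M (f.rTensor A (Coalgebra.comul x)) := by
  rw [LinearMap.rTensor_comp_apply, assoc_rTensor_rTensor, Coalgebra.coassoc_apply,
    rTensor_lTensor_comm]

lemma assoc_rTensor_rightComul (g : A) (f : A →ₗ[R] M) (x : A) :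
    TensorProduct.assoc R M A A ((f.rTensor A ∘ₗ Coalgebra.comul).rTensor A (rightComul R g x)) =
      (rightComul R g).lTensor M (f.rTensor A (Coalgebra.comul x)) := by
  have hunit : ∀ t : M ⊗[R] A, ((TensorProduct.mk R A A).flip g).lTensor M t =
      TensorProduct.assoc R M A A (t ⊗ₜ g) := fun t => by
    induction t <;> simp_all [add_tmul]
  rw [rightComul_apply, map_sub, map_sub, assoc_rTensor_comul, rightComul, LinearMap.lTensor_sub,
    LinearMap.sub_apply, hunit]
  rfl

lemma rightCobar_rightComul {g : A} (hg : Coalgebra.comul g = g ⊗ₜ[R] g) (x : A) :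
    rightCobar R g (rightComul R g x) = 0 := by
  have h := assoc_rTensor_rightComul g (LinearMap.id (R := R) (M := A)) x
  rw [LinearMap.rTensor_id, LinearMap.id_comp, LinearMap.id_apply] at h
  rw [rightCobar_apply, h, ← map_sub, rightComul_apply, sub_sub_cancel, LinearMap.lTensor_tmul,
    rightComul_self hg, tmul_zero]

lemma rTensor_rightCobar (g : A) (f : A →ₗ[R] M) (z : A ⊗[R] A) :
    f.rTensor (A ⊗[R] A) (rightCobar R g z) =
      TensorProduct.assoc R M A A ((f.rTensor A ∘ₗ Coalgebra.comul).rTensor A z) -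
        (rightComul R g).lTensor M (f.rTensor A z) := by
  rw [rightCobar_apply, map_sub, ← assoc_rTensor_rTensor, ← LinearMap.rTensor_comp_apply,
    rTensor_lTensor_comm]

lemma assoc_rTensor_rightCobar (g : A) (f : A →ₗ[R] M) (z : A ⊗[R] A) :
    TensorProduct.assoc R M A (A ⊗[R] A)
        ((f.rTensor A ∘ₗ Coalgebra.comul).rTensor (A ⊗[R] A) (rightCobar R g z)) =
      (rightCobar R g).lTensor M
        (TensorProduct.assoc R M A A ((f.rTensor A ∘ₗ Coalgebra.comul).rTensor A z)) := by
  have pentagon : ∀ (h : A →ₗ[R] M ⊗[R] A) (t : A ⊗[R] A) (b : A),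
      TensorProduct.assoc R M A (A ⊗[R] A)
        (h.rTensor (A ⊗[R] A) (TensorProduct.assoc R A A A (t ⊗ₜ b))) =
      ((TensorProduct.assoc R A A A).toLinearMap ∘ₗ
        (TensorProduct.mk R (A ⊗[R] A) A).flip b).lTensor M
          (TensorProduct.assoc R M A A (h.rTensor A t)) := by
    intro h t b
    induction t with
    | zero => simp
    | add t s ht hs => simp only [add_tmul, map_add, ht, hs]
    | tmul a c =>
      simp only [assoc_tmul, LinearMap.rTensor_tmul]
      induction h a <;> simp_all [add_tmul]
  induction z with
  | zero => simp
  | add z w hz hw => simp only [map_add, hz, hw]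
  | tmul a b =>
    rw [rightCobar_apply, map_sub, map_sub, LinearMap.rTensor_tmul, pentagon, assoc_rTensor_comul,
      LinearMap.lTensor_tmul, LinearMap.rTensor_tmul, LinearMap.rTensor_tmul, LinearMap.comp_apply]
    induction f.rTensor A (Coalgebra.comul a) with
    | zero => simp
    | add t s ht hs => simp only [map_add, add_tmul, ← ht, ← hs]; abel
    | tmul m c => simp [rightCobar_apply, tmul_sub]

end RightReducedCobar

section LeftmostComponent

variable {k C 𝒞}

variable (𝒞) in
/-- The left `C₁`-component `C → C₁ ⊗ C` of the comultiplication, i.e. the sum of all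
`Δ_{1,n}`. -/
abbrev comulOne : C →ₗ[k] ↥(𝒞 1) ⊗[k] C :=
  (component 𝒞 1).rTensor C ∘ₗ Coalgebra.comul

namespace GradedCoalgebraData

lemma Δc_one_eq (D : GradedCoalgebraData k C 𝒞) (n : ℕ) :
    D.Δc 1 n = (component 𝒞 n).lTensor ↥(𝒞 1) ∘ₗ comulOne 𝒞 := by
  rw [D.Δc_eq_map_component, ← LinearMap.comp_assoc, LinearMap.lTensor_comp_rTensor]

lemma comulOne_g (D : GradedCoalgebraData k C 𝒞) : comulOne 𝒞 D.g = 0 := by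
  rw [LinearMap.comp_apply, D.hgrp, LinearMap.rTensor_tmul, D.component_succ_g, zero_tmul]

lemma comulOne_proj_succ (D : GradedCoalgebraData k C 𝒞) (n : ℕ) (x : C) :
    comulOne 𝒞 (proj 𝒞 (n + 1) x) = (proj 𝒞 n).lTensor ↥(𝒞 1) (comulOne 𝒞 x) := by
  rw [LinearMap.comp_apply, D.comul_proj, map_sum, Finset.sum_eq_single 1]
  · rw [← LinearMap.comp_apply, LinearMap.rTensor_comp_map, component_comp_proj,
      ← LinearMap.lTensor_comp_rTensor]
    rfl
  · intro p _ hp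
    rw [← LinearMap.comp_apply, LinearMap.rTensor_comp_map, component_comp_proj_of_ne hp,
      map_zero_left, LinearMap.zero_apply]
  · simp

lemma map_proj_zero_comul {M : Type*} [AddCommGroup M] [Module k M]
    (D : GradedCoalgebraData k C 𝒞) (f : C →ₗ[k] M) (x : C) :
    map f (proj 𝒞 0) (Coalgebra.comul (R := k) x) = f x ⊗ₜ D.g := by
  have hproj : proj 𝒞 0 = LinearMap.toSpanSingleton k C D.g ∘ₗ Coalgebra.counit :=
    LinearMap.ext D.proj_zero_apply
  rw [hproj, ← LinearMap.map_comp_lTensor, LinearMap.comp_apply, Coalgebra.lTensor_counit_comul,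
    map_tmul, LinearMap.toSpanSingleton_apply, one_smul]

lemma comulOne_coe (D : GradedCoalgebraData k C 𝒞) (a : ↥(𝒞 1)) :
    comulOne 𝒞 (a : C) = a ⊗ₜ D.g := by
  rw [← proj_of_mem a.2, D.comulOne_proj_succ, LinearMap.comp_apply, ← LinearMap.comp_apply,
    LinearMap.lTensor_comp_rTensor, D.map_proj_zero_comul]
  exact congrArg (· ⊗ₜ D.g) (LinearMap.congr_fun (component_comp_subtype 1) a)

lemma rightComul_proj (D : GradedCoalgebraData k C 𝒞) (n : ℕ) (x : C) :
    rightComul k D.g (proj 𝒞 n x) =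
      ∑ p ∈ Finset.range n, map (proj 𝒞 p) (proj 𝒞 (n - p)) (rightComul k D.g x) := by
  have hfirst : ∀ p ∈ Finset.range n,
      map (proj 𝒞 p) (proj 𝒞 (n - p)) (rightComul k D.g x) =
        map (proj 𝒞 p) (proj 𝒞 (n - p)) (Coalgebra.comul (R := k) x) := by
    intro p hp
    have hne : 0 ≠ n - p := by grind
    rw [rightComul_apply, map_sub, map_tmul, proj_of_mem_of_ne hne D.g_mem, tmul_zero, sub_zero]
  rw [rightComul_apply, D.comul_proj, Finset.sum_range_succ, Nat.sub_self, D.map_proj_zero_comul,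
    add_sub_cancel_right, Finset.sum_congr rfl hfirst]

lemma ker_rightComul_le_ker_proj_succ (D : GradedCoalgebraData k C 𝒞) (n : ℕ) :
    LinearMap.ker (rightComul k D.g) ≤ LinearMap.ker (proj 𝒞 (n + 1)) := by
  intro x hx
  have hcomul : Coalgebra.comul x = x ⊗ₜ[k] D.g := sub_eq_zero.1 hx
  have hmap := congrArg ((TensorProduct.lid k C).toLinearMap ∘ₗ Coalgebra.counit.rTensor C) hcomul
  simp only [LinearMap.comp_apply, Coalgebra.rTensor_counit_comul, LinearMap.rTensor_tmul,
    LinearEquiv.coe_coe, lid_tmul, one_smul] at hmap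
  rw [LinearMap.mem_ker, hmap, map_smul, proj_of_mem_of_ne n.succ_ne_zero.symm D.g_mem, smul_zero]

namespace Strong

lemma ker_comulOne_le {D : GradedCoalgebraData k C 𝒞} (hD : D.Strong) :
    LinearMap.ker (comulOne 𝒞) ≤ LinearMap.ker (LinearMap.id - proj 𝒞 0) := by
  intro x hx
  have hproj : ∀ n, proj 𝒞 (n + 1) x = 0 := fun n => by
    refine hD 1 n _ (by simpa [add_comm] using proj_mem (n + 1) x) ?_
    rw [D.Δc_one_eq, LinearMap.comp_apply, D.comulOne_proj_succ, LinearMap.mem_ker.1 hx]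
    simp
  refine eq_zero_of_proj_eq_zero (𝒱 := 𝒞) fun n => ?_
  rw [LinearMap.sub_apply, map_sub, LinearMap.id_apply]
  cases n with
  | zero => rw [proj_of_mem (proj_mem 0 x), sub_self]
  | succ n => rw [hproj, proj_of_mem_of_ne n.succ_ne_zero.symm (proj_mem 0 x), sub_zero]

lemma eq_zero_of_rTensor_comulOne {M : Type*} [AddCommGroup M] [Module k M]
    {D : GradedCoalgebraData k C 𝒞} (hD : D.Strong) {z : C ⊗[k] M}
    (hcounit : (Coalgebra.counit (R := k)).rTensor M z = 0)
    (hcomulOne : (comulOne 𝒞).rTensor M z = 0) : z = 0 := by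
  have hz := ker_rTensor_le_ker_rTensor M hD.ker_comulOne_le hcomulOne
  have hle : LinearMap.ker (Coalgebra.counit (R := k) (A := C)) ≤ LinearMap.ker (proj 𝒞 0) :=
    fun x hx => by rw [LinearMap.mem_ker, D.proj_zero_apply, LinearMap.mem_ker.1 hx, zero_smul]
  rwa [LinearMap.mem_ker, LinearMap.rTensor_sub, LinearMap.rTensor_id, LinearMap.sub_apply,
    ker_rTensor_le_ker_rTensor M hle hcounit, sub_zero] at hz

end Strong
end GradedCoalgebraData
end LeftmostComponent

section Exactness

variable {k C 𝒞}

namespace GradedCoalgebraData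

/-- The image of `Δ_{1,1} : C₂ → C₁ ⊗ C₁`. -/
def relations (D : GradedCoalgebraData k C 𝒞) : Submodule k (↥(𝒞 1) ⊗[k] ↥(𝒞 1)) :=
  (𝒞 2).map (D.Δc 1 1)

/-- The map `C₁ ⊗ C → ((C₁ ⊗ C₁) ⧸ Im Δ_{1,1}) ⊗ C` which follows `comulOne 𝒞` in the beginning
of a minimal cofree resolution of `k`. -/
def quadDiff (D : GradedCoalgebraData k C 𝒞) :
    ↥(𝒞 1) ⊗[k] C →ₗ[k] ((↥(𝒞 1) ⊗[k] ↥(𝒞 1)) ⧸ D.relations) ⊗[k] C :=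
  D.relations.mkQ.rTensor C ∘ₗ (TensorProduct.assoc k ↥(𝒞 1) ↥(𝒞 1) C).symm.toLinearMap ∘ₗ
    (comulOne 𝒞).lTensor ↥(𝒞 1)

/-- Exactness of `C → C₁ ⊗ C → ((C₁ ⊗ C₁) ⧸ Im Δ_{1,1}) ⊗ C` at `C₁ ⊗ Cₙ`. -/
def ExactInDegree (D : GradedCoalgebraData k C 𝒞) (n : ℕ) : Prop :=
  LinearMap.ker D.quadDiff ≤
    (LinearMap.range (comulOne 𝒞)).comap ((proj 𝒞 n).lTensor ↥(𝒞 1))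

lemma quadDiff_apply (D : GradedCoalgebraData k C 𝒞) (u : ↥(𝒞 1) ⊗[k] C) :
    D.quadDiff u = D.relations.mkQ.rTensor C
      ((TensorProduct.assoc k ↥(𝒞 1) ↥(𝒞 1) C).symm ((comulOne 𝒞).lTensor ↥(𝒞 1) u)) := rfl

lemma Δc_one_one_proj_two (D : GradedCoalgebraData k C 𝒞) (x : C) :
    D.Δc 1 1 (proj 𝒞 2 x) = D.Δc 1 1 x := by
  rw [D.Δc_one_eq, LinearMap.comp_apply, D.comulOne_proj_succ, ← LinearMap.lTensor_comp_apply,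
    component_comp_proj]
  rfl

lemma mkQ_comp_Δc_one_one (D : GradedCoalgebraData k C 𝒞) :
    D.relations.mkQ ∘ₗ D.Δc 1 1 = 0 :=
  LinearMap.ext fun x => (Submodule.Quotient.mk_eq_zero _).2
    ⟨proj 𝒞 2 x, proj_mem 2 x, D.Δc_one_one_proj_two x⟩

lemma quadDiff_eq_zero (D : GradedCoalgebraData k C 𝒞) {u : ↥(𝒞 1) ⊗[k] C} {z : C ⊗[k] C}
    (h : (comulOne 𝒞).lTensor ↥(𝒞 1) u =
      TensorProduct.assoc k ↥(𝒞 1) ↥(𝒞 1) C ((D.Δc 1 1).rTensor C z)) :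
    D.quadDiff u = 0 := by
  rw [quadDiff_apply, h, LinearEquiv.symm_apply_apply, ← LinearMap.rTensor_comp_apply,
    D.mkQ_comp_Δc_one_one, LinearMap.rTensor_zero, LinearMap.zero_apply]

lemma quadDiff_comulOne (D : GradedCoalgebraData k C 𝒞) (x : C) :
    D.quadDiff (comulOne 𝒞 x) = 0 := by
  refine D.quadDiff_eq_zero (z := Coalgebra.comul x) ?_
  rw [D.Δc_one_eq, LinearMap.rTensor_comp_apply, assoc_lTensor_rTensor, assoc_rTensor_comul,
    ← LinearMap.lTensor_comp_apply]
  rfl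

lemma quadDiff_lTensor_proj_succ (D : GradedCoalgebraData k C 𝒞) (n : ℕ)
    (u : ↥(𝒞 1) ⊗[k] C) : D.quadDiff ((proj 𝒞 (n + 1)).lTensor ↥(𝒞 1) u) =
      (proj 𝒞 n).lTensor _ (D.quadDiff u) := by
  have hcomul : comulOne 𝒞 ∘ₗ proj 𝒞 (n + 1) = (proj 𝒞 n).lTensor ↥(𝒞 1) ∘ₗ comulOne 𝒞 :=
    LinearMap.ext (D.comulOne_proj_succ n)
  rw [quadDiff_apply, quadDiff_apply, ← rTensor_lTensor_comm, ← LinearMap.lTensor_comp_apply,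
    hcomul, LinearMap.lTensor_comp_apply, LinearMap.lTensor_tensor]
  simp

lemma assoc_rTensor_quadDiff (D : GradedCoalgebraData k C 𝒞) (u : ↥(𝒞 1) ⊗[k] C) :
    TensorProduct.assoc k _ C C (D.quadDiff.rTensor C
        ((TensorProduct.assoc k ↥(𝒞 1) C C).symm ((rightComul k D.g).lTensor ↥(𝒞 1) u))) =
      (rightComul k D.g).lTensor _ (D.quadDiff u) := by
  induction u with
  | zero => simp
  | add u v hu hv => simp only [map_add, hu, hv]
  | tmul a b =>
    have hquad : D.quadDiff ∘ₗ TensorProduct.mk k ↥(𝒞 1) C a =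
        (D.relations.mkQ ∘ₗ TensorProduct.mk k _ _ a ∘ₗ component 𝒞 1).rTensor C ∘ₗ
          Coalgebra.comul := by
      ext c
      simp only [LinearMap.comp_apply, quadDiff_apply, mk_apply, LinearMap.lTensor_tmul]
      induction Coalgebra.comul (R := k) c <;> simp_all [tmul_add]
    have hsymm : ∀ t : C ⊗[k] C, (TensorProduct.assoc k ↥(𝒞 1) C C).symm (a ⊗ₜ t) =
        (TensorProduct.mk k ↥(𝒞 1) C a).rTensor C t := fun t => by
      induction t <;> simp_all [tmul_add]
    rw [LinearMap.lTensor_tmul, hsymm, ← LinearMap.rTensor_comp_apply, hquad,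
      assoc_rTensor_rightComul, ← LinearMap.comp_apply _ Coalgebra.comul, ← hquad]
    rfl

lemma lTensor_counit_quadDiff (D : GradedCoalgebraData k C 𝒞) (u : ↥(𝒞 1) ⊗[k] C) :
    Coalgebra.counit.lTensor _ (D.quadDiff u) =
      D.relations.mkQ ((component 𝒞 1).lTensor ↥(𝒞 1) u) ⊗ₜ[k] (1 : k) := by
  induction u with
  | zero => simp
  | add u v hu hv => simp only [map_add, add_tmul, hu, hv]
  | tmul a b =>
    have hcounit : (Coalgebra.counit (R := k) (A := C)).lTensor ↥(𝒞 1)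
        ((component 𝒞 1).rTensor C (Coalgebra.comul b)) = component 𝒞 1 b ⊗ₜ 1 := by
      rw [← rTensor_lTensor_comm, Coalgebra.lTensor_counit_comul,
        LinearMap.rTensor_tmul]
    rw [quadDiff_apply, ← rTensor_lTensor_comm, LinearMap.lTensor_tensor]
    simp [hcounit]

lemma exactInDegree_zero (D : GradedCoalgebraData k C 𝒞) : D.ExactInDegree 0 := by
  rintro u -
  rw [Submodule.mem_comap]
  induction u with
  | zero => simp
  | add u v hu hv => rw [map_add]; exact add_mem hu hv
  | tmul a c =>
    exact ⟨Coalgebra.counit (R := k) c • (a : C), by simp [D.comulOne_coe, D.proj_zero_apply]⟩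

lemma exactInDegree_one (D : GradedCoalgebraData k C 𝒞) : D.ExactInDegree 1 := by
  intro u hu
  have hrel : (component 𝒞 1).lTensor ↥(𝒞 1) u ∈ D.relations := by
    rw [← Submodule.ker_mkQ D.relations, LinearMap.mem_ker]
    simpa [LinearMap.mem_ker.1 hu] using
      (congrArg (TensorProduct.rid k _) (D.lTensor_counit_quadDiff u)).symm
  obtain ⟨x, hx, hxu⟩ := hrel
  refine ⟨x, ?_⟩
  rw [← proj_of_mem hx, D.comulOne_proj_succ, proj, LinearMap.lTensor_comp_apply,
    LinearMap.lTensor_comp_apply, ← hxu, D.Δc_one_eq]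
  rfl

end GradedCoalgebraData
end Exactness

section Cobar

variable {k C 𝒞}

section Omega

variable {V : Type} [AddCommGroup V] [Module k V] {𝒱 : ℕ → Submodule k V}

lemma mem_omega_two_iff {m : ℕ} {z : V ⊗[k] V} : z ∈ omega k 𝒱 2 m ↔ z ∈ Submodule.span k
    {t | ∃ p q, p ≠ 0 ∧ q ≠ 0 ∧ p + q = m ∧ ∃ a ∈ 𝒱 p, ∃ b ∈ 𝒱 q, a ⊗ₜ b = t} := by
  suffices hspan : ⨆ p ∈ Finset.Icc 1 m,
      LinearMap.range (mapIncl (𝒱 p) (if m - p = 0 then ⊥ else 𝒱 (m - p))) =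
        Submodule.span k {t : V ⊗[k] V |
          ∃ p q, p ≠ 0 ∧ q ≠ 0 ∧ p + q = m ∧ ∃ a ∈ 𝒱 p, ∃ b ∈ 𝒱 q, a ⊗ₜ b = t} from
    SetLike.ext_iff.1 hspan z
  refine le_antisymm (iSup₂_le fun p hp => ?_) (Submodule.span_le.2 ?_)
  · obtain ⟨hp, hpm⟩ := Finset.mem_Icc.1 hp
    rw [range_mapIncl, Submodule.map₂_le]
    intro a ha b hb
    split_ifs at hb with hq
    · rw [(Submodule.mem_bot k).1 hb, map_zero]
      exact zero_mem _
    · exact Submodule.subset_span ⟨p, m - p, by omega, hq, by omega, a, ha, b, hb, rfl⟩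
  · rintro _ ⟨p, q, hp, hq, rfl, a, ha, b, hb, rfl⟩
    refine Submodule.mem_iSup_of_mem p (Submodule.mem_iSup_of_mem
      (Finset.mem_Icc.2 ⟨Nat.one_le_iff_ne_zero.2 hp, Nat.le_add_right p q⟩) ?_)
    rw [Nat.add_sub_cancel_left, if_neg hq]
    exact ⟨⟨a, ha⟩ ⊗ₜ ⟨b, hb⟩, rfl⟩

lemma map_proj_mem_omega_two [DirectSum.Decomposition 𝒱] {p q : ℕ} (hp : p ≠ 0) (hq : q ≠ 0)
    (t : V ⊗[k] V) : map (proj 𝒱 p) (proj 𝒱 q) t ∈ omega k 𝒱 2 (p + q) := by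
  refine mem_omega_two_iff.2 ?_
  induction t with
  | zero => exact (map_zero (map (proj 𝒱 p) (proj 𝒱 q))).symm ▸ zero_mem _
  | add t s ht hs => simpa only [map_add] using add_mem ht hs
  | tmul a b =>
    exact Submodule.subset_span
      ⟨p, q, hp, hq, rfl, proj 𝒱 p a, proj_mem p a, proj 𝒱 q b, proj_mem q b, rfl⟩

lemma rTensor_component_one_of_mem_omega_two [DirectSum.Decomposition 𝒱] {n : ℕ} {z : V ⊗[k] V}
    (hz : z ∈ omega k 𝒱 2 (n + 1)) :
    (component 𝒱 1).rTensor V z = map (component 𝒱 1) (proj 𝒱 n) z := by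
  refine LinearMap.eqOn_span ?_ (mem_omega_two_iff.1 hz)
  rintro _ ⟨p, q, _, _, hpq, a, ha, b, hb, rfl⟩
  rw [LinearMap.rTensor_tmul, map_tmul]
  by_cases hp : p = 1
  · rw [proj_of_mem (show b ∈ 𝒱 n by rwa [show n = q by omega])]
  · rw [component_of_mem_of_ne hp ha, zero_tmul, zero_tmul]

end Omega

lemma deltaPlus_apply (g x : C) : deltaPlus k C g x = rightComul k g x - g ⊗ₜ x :=
  sub_right_comm ..

lemma cobarD_one (g x : C) : cobarD k C (deltaPlus k C g) 1 x = deltaPlus k C g x := by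
  change (∑ i ∈ Finset.range 1, ((-1 : k) ^ i) • expand k C (deltaPlus k C g) 0 i) x = _
  rw [Finset.sum_range_one, pow_zero, one_smul]
  rfl

lemma cobarD_two (g : C) (z : C ⊗[k] C) :
    cobarD k C (deltaPlus k C g) 2 z = rightCobar k g z - g ⊗ₜ z := by
  have hexpand : TensorProduct.assoc k C C C ((deltaPlus k C g).rTensor C z) -
      (deltaPlus k C g).lTensor C z = rightCobar k g z - g ⊗ₜ z := by
    induction z with
    | zero => simp
    | add z w hz hw => simp only [map_add, tmul_add, add_sub_add_comm, hz, hw]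
    | tmul a b =>
      simp only [deltaPlus_apply, rightCobar_apply, rightComul_apply, LinearMap.rTensor_tmul,
        LinearMap.lTensor_tmul, sub_tmul, tmul_sub, map_sub, assoc_tmul]
      abel
  refine Eq.trans ?_ hexpand
  change (∑ i ∈ Finset.range 2, ((-1 : k) ^ i) • expand k C (deltaPlus k C g) 1 i) z = _
  rw [Finset.sum_range_succ, Finset.sum_range_one, pow_zero, one_smul, pow_one, neg_one_smul,
    ← sub_eq_add_neg]
  rfl

lemma rightCobar_deltaPlus {g : C} (hg : Coalgebra.comul g = g ⊗ₜ[k] g) (x : C) :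
    rightCobar k g (deltaPlus k C g x) = g ⊗ₜ deltaPlus k C g x := by
  rw [deltaPlus_apply, map_sub, rightCobar_rightComul hg, rightCobar_apply, LinearMap.rTensor_tmul,
    LinearMap.lTensor_tmul, hg, assoc_tmul, zero_sub, neg_sub, tmul_sub]

lemma subsingleton_extGrp_two_iff {𝒱 : ℕ → Submodule k C} {m : ℕ} (hm : m ≠ 0) (g : C) :
    Subsingleton (ExtGrp k C 𝒱 (deltaPlus k C g) 2 m) ↔
      ∀ z : C ⊗[k] C, z ∈ omega k 𝒱 2 m → rightCobar k g z = g ⊗ₜ z →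
        ∃ x ∈ 𝒱 m, deltaPlus k C g x = z := by
  have homega : omega k 𝒱 1 m = 𝒱 m := if_neg hm
  change Subsingleton (_ ⧸ _) ↔ _
  rw [Submodule.Quotient.subsingleton_iff, Submodule.comap_subtype_eq_top]
  constructor
  · intro h z hz hcocycle
    obtain ⟨x, hx, hxz⟩ := h (x := z) ⟨(cobarD_two g z).trans (sub_eq_zero.2 hcocycle), hz⟩
    rw [homega] at hx
    exact ⟨x, hx, (cobarD_one g x).symm.trans hxz⟩
  · rintro h z ⟨hcocycle, hz⟩
    obtain ⟨x, hx, hxz⟩ := h z hz (sub_eq_zero.1 ((cobarD_two g z).symm.trans hcocycle))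
    refine ⟨x, ?_, (cobarD_one g x).trans hxz⟩
    rw [homega]
    exact hx

namespace GradedCoalgebraData

lemma rTensor_counit_of_mem_omega_two {𝒱 : ℕ → Submodule k C} (D : GradedCoalgebraData k C 𝒱)
    {m : ℕ} {z : C ⊗[k] C} (hz : z ∈ omega k 𝒱 2 m) :
    (Coalgebra.counit (R := k)).rTensor C z = 0 := by
  refine LinearMap.eqOn_span (g := 0) ?_ (mem_omega_two_iff.1 hz)
  rintro _ ⟨p, q, hp, _, _, a, ha, b, _, rfl⟩
  rw [LinearMap.rTensor_tmul, D.hcounit p (Nat.one_le_iff_ne_zero.2 hp) a ha,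
    zero_tmul, LinearMap.zero_apply]

lemma rTensor_counit_deltaPlus {𝒱 : ℕ → Submodule k C} (D : GradedCoalgebraData k C 𝒱) {n : ℕ}
    {x : C} (hx : x ∈ 𝒱 (n + 1)) :
    (Coalgebra.counit (R := k)).rTensor C (deltaPlus k C D.g x) = 0 := by
  rw [deltaPlus_apply, rightComul_apply, map_sub, map_sub, Coalgebra.rTensor_counit_comul,
    LinearMap.rTensor_tmul, LinearMap.rTensor_tmul, D.hcounit _ n.succ_pos x hx, D.hcu, zero_tmul,
    sub_zero, sub_self]

lemma rTensor_component_one_rightComul (D : GradedCoalgebraData k C 𝒞) {n : ℕ} {x : C}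
    (hx : x ∈ 𝒞 (n + 2)) : (component 𝒞 1).rTensor C (rightComul k D.g x) = comulOne 𝒞 x := by
  rw [rightComul_apply, map_sub, LinearMap.rTensor_tmul, component_of_mem_of_ne (by omega) hx,
    zero_tmul, sub_zero]
  rfl

lemma rTensor_component_one_deltaPlus (D : GradedCoalgebraData k C 𝒞) {n : ℕ} {x : C}
    (hx : x ∈ 𝒞 (n + 2)) : (component 𝒞 1).rTensor C (deltaPlus k C D.g x) = comulOne 𝒞 x := by
  rw [deltaPlus_apply, map_sub, D.rTensor_component_one_rightComul hx, LinearMap.rTensor_tmul,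
    D.component_succ_g, zero_tmul, sub_zero]

lemma assoc_rTensor_comulOne_of_rightCobar_eq (D : GradedCoalgebraData k C 𝒞) {z : C ⊗[k] C}
    (hz : rightCobar k D.g z = D.g ⊗ₜ z) :
    TensorProduct.assoc k ↥(𝒞 1) C C ((comulOne 𝒞).rTensor C z) =
      (rightComul k D.g).lTensor ↥(𝒞 1) ((component 𝒞 1).rTensor C z) := by
  have h := rTensor_rightCobar D.g (component 𝒞 1) z
  rw [hz, LinearMap.rTensor_tmul, D.component_succ_g, zero_tmul] at h
  exact sub_eq_zero.1 h.symm

namespace Strong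

lemma eq_zero_of_rightCobar_eq {D : GradedCoalgebraData k C 𝒞} (hD : D.Strong) {z : C ⊗[k] C}
    (hcocycle : rightCobar k D.g z = D.g ⊗ₜ z)
    (hcounit : (Coalgebra.counit (R := k)).rTensor C z = 0)
    (hcomponent : (component 𝒞 1).rTensor C z = 0) : z = 0 := by
  refine hD.eq_zero_of_rTensor_comulOne hcounit ?_
  rw [← LinearEquiv.map_eq_zero_iff (TensorProduct.assoc k ↥(𝒞 1) C C),
    D.assoc_rTensor_comulOne_of_rightCobar_eq hcocycle, hcomponent, map_zero]

lemma rightCobar_eq {D : GradedCoalgebraData k C 𝒞} (hD : D.Strong) {z : C ⊗[k] C}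
    {u : ↥(𝒞 1) ⊗[k] C} (hcounit : (Coalgebra.counit (R := k)).rTensor C z = 0)
    (hcomulOne : TensorProduct.assoc k ↥(𝒞 1) C C ((comulOne 𝒞).rTensor C z) =
      (rightComul k D.g).lTensor ↥(𝒞 1) u) : rightCobar k D.g z = D.g ⊗ₜ z := by
  refine sub_eq_zero.1 (hD.eq_zero_of_rTensor_comulOne ?_ ?_)
  · have hunit : ∀ t : C ⊗[k] C, TensorProduct.assoc k k C C
        (((Coalgebra.counit (R := k)).rTensor C ∘ₗ Coalgebra.comul).rTensor C t) =
          1 ⊗ₜ t := fun t => by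
      rw [Coalgebra.rTensor_counit_comp_comul]
      induction t <;> simp_all [tmul_add]
    rw [map_sub, rTensor_rightCobar, hcounit, map_zero, sub_zero, hunit, LinearMap.rTensor_tmul,
      D.hcu, sub_self]
  · have hδρ : rightCobar k D.g ∘ₗ rightComul k D.g = 0 :=
      LinearMap.ext (rightCobar_rightComul D.hgrp)
    rw [map_sub, LinearMap.rTensor_tmul, D.comulOne_g, zero_tmul, sub_eq_zero,
      ← LinearEquiv.map_eq_zero_iff (TensorProduct.assoc k ↥(𝒞 1) C (C ⊗[k] C)),
      assoc_rTensor_rightCobar, hcomulOne, ← LinearMap.lTensor_comp_apply, hδρ,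
      LinearMap.lTensor_zero, LinearMap.zero_apply]

end Strong
end GradedCoalgebraData
end Cobar

section Ext

variable {k C 𝒞}

namespace GradedCoalgebraData

lemma assoc_rTensor_comulOne_map_proj (D : GradedCoalgebraData k C 𝒞) (p q : ℕ) (t : C ⊗[k] C) :
    TensorProduct.assoc k ↥(𝒞 1) C C
        ((comulOne 𝒞).rTensor C (map (proj 𝒞 (p + 1)) (proj 𝒞 q) t)) =
      (map (proj 𝒞 p) (proj 𝒞 q)).lTensor ↥(𝒞 1)
        (TensorProduct.assoc k ↥(𝒞 1) C C ((comulOne 𝒞).rTensor C t)) := by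
  induction t with
  | zero => simp only [map_zero]
  | add t s ht hs => simp only [map_add, ht, hs]
  | tmul a b =>
    rw [map_tmul, LinearMap.rTensor_tmul, LinearMap.rTensor_tmul, D.comulOne_proj_succ]
    induction comulOne 𝒞 a <;> simp_all [add_tmul]

lemma exists_assoc_rTensor_comulOne_eq (D : GradedCoalgebraData k C 𝒞) {n : ℕ}
    (hexact : ∀ p < n, D.ExactInDegree p) {u : ↥(𝒞 1) ⊗[k] C} (hu : D.quadDiff u = 0) :
    ∃ v : C ⊗[k] C, v ∈ omega k 𝒞 2 (n + 1) ∧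
      TensorProduct.assoc k ↥(𝒞 1) C C ((comulOne 𝒞).rTensor C v) =
        (rightComul k D.g).lTensor ↥(𝒞 1) ((proj 𝒞 n).lTensor ↥(𝒞 1) u) := by
  let y := (TensorProduct.assoc k ↥(𝒞 1) C C).symm ((rightComul k D.g).lTensor ↥(𝒞 1) u)
  have hy : D.quadDiff.rTensor C y = 0 := by
    rw [← LinearEquiv.map_eq_zero_iff (TensorProduct.assoc k _ C C), D.assoc_rTensor_quadDiff, hu,
      map_zero]
  have hlift : ∀ p < n, ∃ v, (comulOne 𝒞).rTensor C v =
      ((proj 𝒞 p).lTensor ↥(𝒞 1)).rTensor C y := fun p hp =>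
    ker_rTensor_le_comap_range_rTensor C (hexact p hp) hy
  choose! v hv using hlift
  have hcomponent : ∀ p < n, TensorProduct.assoc k ↥(𝒞 1) C C
      ((comulOne 𝒞).rTensor C (map (proj 𝒞 (p + 1)) (proj 𝒞 (n - p)) (v p))) =
        (map (proj 𝒞 p) (proj 𝒞 (n - p)) ∘ₗ rightComul k D.g).lTensor ↥(𝒞 1) u := by
    intro p hp
    rw [D.assoc_rTensor_comulOne_map_proj, hv p hp, assoc_lTensor_rTensor,
      ← LinearMap.lTensor_comp_apply, LinearMap.map_comp_rTensor, proj_comp_proj,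
      LinearEquiv.apply_symm_apply, ← LinearMap.lTensor_comp_apply]
  have hρ : rightComul k D.g ∘ₗ proj 𝒞 n =
      ∑ p ∈ Finset.range n, map (proj 𝒞 p) (proj 𝒞 (n - p)) ∘ₗ rightComul k D.g :=
    LinearMap.ext fun x => by simpa using D.rightComul_proj n x
  refine ⟨∑ p ∈ Finset.range n, map (proj 𝒞 (p + 1)) (proj 𝒞 (n - p)) (v p), ?_, ?_⟩
  · refine Submodule.sum_mem (omega k 𝒞 2 (n + 1)) fun p hp => ?_
    have hpn := Finset.mem_range.1 hp
    rw [show n + 1 = p + 1 + (n - p) by omega]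
    exact map_proj_mem_omega_two p.succ_ne_zero (by omega) (v p)
  · rw [← LinearMap.lTensor_comp_apply, hρ, map_sum, map_sum,
      Finset.sum_congr rfl fun p hp => hcomponent p (Finset.mem_range.1 hp)]
    simp only [← LinearMap.coe_lTensorHom, map_sum, LinearMap.sum_apply]

namespace Strong

lemma subsingleton_extGrp_two {D : GradedCoalgebraData k C 𝒞} (hD : D.Strong) {n : ℕ}
    (hexact : D.ExactInDegree (n + 2)) :
    Subsingleton (ExtGrp k C 𝒞 (deltaPlus k C D.g) 2 (n + 3)) := by
  rw [subsingleton_extGrp_two_iff (by omega)]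
  intro z hz hcocycle
  have hu : (proj 𝒞 (n + 2)).lTensor ↥(𝒞 1) ((component 𝒞 1).rTensor C z) =
      (component 𝒞 1).rTensor C z := by
    rw [← LinearMap.comp_apply, LinearMap.lTensor_comp_rTensor,
      rTensor_component_one_of_mem_omega_two hz]
  have hquad : D.quadDiff ((component 𝒞 1).rTensor C z) = 0 := by
    have hcomp : ((component 𝒞 1).rTensor C ∘ₗ rightComul k D.g) ∘ₗ proj 𝒞 (n + 2) =
        comulOne 𝒞 ∘ₗ proj 𝒞 (n + 2) :=
      LinearMap.ext fun x => D.rTensor_component_one_rightComul (proj_mem _ x)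
    refine D.quadDiff_eq_zero (z := z) ?_
    rw [D.Δc_one_eq, LinearMap.rTensor_comp_apply, assoc_lTensor_rTensor,
      D.assoc_rTensor_comulOne_of_rightCobar_eq hcocycle, ← hu, ← LinearMap.lTensor_comp_apply,
      ← LinearMap.lTensor_comp_apply, ← LinearMap.lTensor_comp_apply, hcomp]
  obtain ⟨c, hc⟩ := hexact hquad
  have hx := proj_mem (𝒱 := 𝒞) (n + 3) c
  refine ⟨proj 𝒞 (n + 3) c, hx, ?_⟩
  refine sub_eq_zero.1 (hD.eq_zero_of_rightCobar_eq ?_ ?_ ?_)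
  · rw [map_sub, rightCobar_deltaPlus D.hgrp, hcocycle, tmul_sub]
  · rw [map_sub, D.rTensor_counit_deltaPlus hx, D.rTensor_counit_of_mem_omega_two hz, sub_zero]
  · rw [map_sub, D.rTensor_component_one_deltaPlus hx, D.comulOne_proj_succ, hc, hu, hu, sub_self]

lemma exactInDegree_succ {D : GradedCoalgebraData k C 𝒞} (hD : D.Strong) {n : ℕ}
    (hexact : ∀ p ≤ n, D.ExactInDegree p)
    (hext : Subsingleton (ExtGrp k C 𝒞 (deltaPlus k C D.g) 2 (n + 2))) :
    D.ExactInDegree (n + 1) := by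
  intro u hu
  obtain ⟨v, hv, hvu⟩ :=
    D.exists_assoc_rTensor_comulOne_eq (fun p hp => hexact p (Nat.lt_succ_iff.1 hp)) hu
  have hcocycle := hD.rightCobar_eq (D.rTensor_counit_of_mem_omega_two hv) hvu
  obtain ⟨x, hx, rfl⟩ :=
    (subsingleton_extGrp_two_iff (by omega) D.g).1 hext v hv hcocycle
  have hker : (rightComul k D.g).lTensor ↥(𝒞 1)
      ((proj 𝒞 (n + 1)).lTensor ↥(𝒞 1) u - comulOne 𝒞 x) = 0 := by
    rw [map_sub, ← hvu, D.assoc_rTensor_comulOne_of_rightCobar_eq hcocycle,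
      D.rTensor_component_one_deltaPlus hx, sub_self]
  have hproj := ker_lTensor_le_ker_lTensor ↥(𝒞 1) (D.ker_rightComul_le_ker_proj_succ n) hker
  rw [LinearMap.mem_ker, map_sub, ← LinearMap.lTensor_comp_apply, proj_comp_proj,
    ← D.comulOne_proj_succ, proj_of_mem hx, sub_eq_zero] at hproj
  exact ⟨x, hproj.symm⟩

end Strong
end GradedCoalgebraData
end Ext

section Quadratic

variable {k C 𝒞} {W : Type*} [AddCommGroup W] [Module k W]

/-- The map `C → C₁ ⊗ W` induced by `f : C → W`, by which `Δ(m + 1)` arises from `Δ(m)`. -/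
def comulOneExtend (f : C →ₗ[k] W) : C →ₗ[k] ↥(𝒞 1) ⊗[k] W :=
  f.lTensor ↥(𝒞 1) ∘ₗ comulOne 𝒞

lemma comulOneExtend_apply (f : C →ₗ[k] W) (x : C) :
    comulOneExtend (𝒞 := 𝒞) f x = f.lTensor ↥(𝒞 1) (comulOne 𝒞 x) := rfl

namespace GradedCoalgebraData

/-- The intersection of `Im Δ_{1,1} ⊗ W` and `C₁ ⊗ T` in `C₁ ⊗ C₁ ⊗ W`, by which the subspace
`C̃_{m+1}` arises from `C̃_m`. -/
def relationsInter (D : GradedCoalgebraData k C 𝒞) (T : Submodule k (↥(𝒞 1) ⊗[k] W)) :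
    Submodule k (↥(𝒞 1) ⊗[k] (↥(𝒞 1) ⊗[k] W)) :=
  (LinearMap.range (D.relations.subtype.rTensor W)).map
      (TensorProduct.assoc k ↥(𝒞 1) ↥(𝒞 1) W).toLinearMap ⊓
    LinearMap.range (T.subtype.lTensor ↥(𝒞 1))

lemma relationsInter_Ctilde {𝒱 : ℕ → Submodule k C} (D : GradedCoalgebraData k C 𝒱)
    (j : ℕ) :
    D.relationsInter (W := ↥(TP k ↥(𝒱 1) (j + 1))) (Ctilde k C 𝒱 D j) =
      Ctilde k C 𝒱 D (j + 1) := by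
  have hrange : LinearMap.range ((Ctilde k C 𝒱 D j).subtype.lTensor ↥(𝒱 1)) =
      ⨅ i ∈ Finset.range (j + 1), insertK k D.relations (j + 1) (i + 1) :=
    (range_lTensor_subtype_iInf ↥(𝒱 1) _).trans
      (iInf_congr fun i => range_lTensor_subtype_iInf ↥(𝒱 1) _)
  have hsplit : Ctilde k C 𝒱 D (j + 1) = insertK k D.relations (j + 1) 0 ⊓
      ⨅ i ∈ Finset.range (j + 1), insertK k D.relations (j + 1) (i + 1) := by
    simp only [Ctilde, Finset.mem_range]
    exact Nat.iInf_lt_succ' (insertK k D.relations (j + 1)) (j + 1)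
  exact (congrArg _ hrange).trans hsplit.symm

lemma comulOneExtend_proj_succ (D : GradedCoalgebraData k C 𝒞) (f : C →ₗ[k] W) (n : ℕ) (x : C) :
    comulOneExtend (𝒞 := 𝒞) f (proj 𝒞 (n + 1) x) = comulOneExtend (f ∘ₗ proj 𝒞 n) x := by
  rw [comulOneExtend_apply, D.comulOne_proj_succ, ← LinearMap.lTensor_comp_apply,
    comulOneExtend_apply]

lemma rTensor_mkQ_lTensor_comulOneExtend (D : GradedCoalgebraData k C 𝒞) (f : C →ₗ[k] W)
    (u : ↥(𝒞 1) ⊗[k] C) :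
    D.relations.mkQ.rTensor W ((TensorProduct.assoc k ↥(𝒞 1) ↥(𝒞 1) W).symm
        ((comulOneExtend f).lTensor ↥(𝒞 1) u)) = f.lTensor _ (D.quadDiff u) := by
  rw [quadDiff_apply, ← rTensor_lTensor_comm, comulOneExtend, LinearMap.lTensor_comp_apply,
    LinearMap.lTensor_tensor]
  simp

lemma deltaIter_add_two_eq_comulOneExtend_comp_proj (D : GradedCoalgebraData k C 𝒞) (n : ℕ) :
    comulOneExtend (deltaIter k C 𝒞 D (n + 1) ∘ₗ proj 𝒞 (n + 1)) = deltaIter k C 𝒞 D (n + 2) := by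
  have h : ∀ f : C →ₗ[k] ↥(TP k ↥(𝒞 1) (n + 1)), comulOneExtend (f ∘ₗ proj 𝒞 (n + 1)) =
      (f ∘ₗ (𝒞 (n + 1)).subtype).lTensor ↥(𝒞 1) ∘ₗ D.Δc 1 (n + 1) := fun f => by
    rw [D.Δc_one_eq, ← LinearMap.comp_assoc, ← LinearMap.lTensor_comp]
    rfl
  exact h _

lemma deltaIter_comp_proj (D : GradedCoalgebraData k C 𝒞) (n : ℕ) :
    deltaIter k C 𝒞 D (n + 1) ∘ₗ proj 𝒞 (n + 1) = deltaIter k C 𝒞 D (n + 1) := by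
  cases n with
  | zero => exact component_comp_proj 1
  | succ n =>
    have hproj : comulOneExtend (𝒞 := 𝒞) (deltaIter k C 𝒞 D (n + 1) ∘ₗ proj 𝒞 (n + 1)) ∘ₗ
        proj 𝒞 (n + 2) = comulOneExtend (deltaIter k C 𝒞 D (n + 1) ∘ₗ proj 𝒞 (n + 1)) :=
      LinearMap.ext fun x => by
        rw [LinearMap.comp_apply, D.comulOneExtend_proj_succ, LinearMap.comp_assoc, proj_comp_proj]
    exact D.deltaIter_add_two_eq_comulOneExtend_comp_proj n ▸ hproj

lemma comulOneExtend_deltaIter (D : GradedCoalgebraData k C 𝒞) (n : ℕ) :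
    comulOneExtend (deltaIter k C 𝒞 D (n + 1)) = deltaIter k C 𝒞 D (n + 2) := by
  rw [← D.deltaIter_add_two_eq_comulOneExtend_comp_proj, D.deltaIter_comp_proj]

lemma map_deltaIter (D : GradedCoalgebraData k C 𝒞) (n : ℕ) :
    (𝒞 (n + 1)).map (deltaIter k C 𝒞 D (n + 1)) = LinearMap.range (deltaIter k C 𝒞 D (n + 1)) := by
  refine le_antisymm LinearMap.map_le_range ?_
  rintro _ ⟨x, rfl⟩
  exact ⟨proj 𝒞 (n + 1) x, proj_mem _ x, LinearMap.congr_fun (D.deltaIter_comp_proj n) x⟩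

lemma Ctilde_zero (D : GradedCoalgebraData k C 𝒞) :
    Ctilde k C 𝒞 D 0 = LinearMap.range (deltaIter k C 𝒞 D 2) := by
  have hdelta : deltaIter k C 𝒞 D 2 = D.Δc 1 1 :=
    (congrArg (fun f => f.lTensor ↥(𝒞 1) ∘ₗ D.Δc 1 1) (component_comp_subtype 1)).trans
      (by rw [LinearMap.lTensor_id, LinearMap.id_comp])
  have hCtilde : Ctilde k C 𝒞 D 0 = insertK k D.relations 0 0 := by simp [Ctilde, relations]
  refine hCtilde.trans (Eq.trans ?_ (D.map_deltaIter 1))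
  rw [hdelta]
  rfl

namespace Strong

lemma ker_comulOneExtend {D : GradedCoalgebraData k C 𝒞} (hD : D.Strong) {n : ℕ}
    {f : C →ₗ[k] W} (hf : LinearMap.ker f = LinearMap.ker (proj 𝒞 n)) :
    LinearMap.ker (comulOneExtend (𝒞 := 𝒞) f) = LinearMap.ker (proj 𝒞 (n + 1)) := by
  ext x
  rw [LinearMap.mem_ker, comulOneExtend_apply, ← LinearMap.mem_ker, ker_lTensor_congr _ hf,
    LinearMap.mem_ker, ← D.comulOne_proj_succ, LinearMap.mem_ker]
  refine ⟨fun h => ?_, fun h => by rw [h, map_zero]⟩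
  have hzero := hD.ker_comulOne_le h
  rwa [LinearMap.mem_ker, LinearMap.sub_apply, LinearMap.id_apply,
    proj_of_mem_of_ne n.succ_ne_zero (proj_mem _ x), sub_zero] at hzero

lemma ker_deltaIter {D : GradedCoalgebraData k C 𝒞} (hD : D.Strong) (n : ℕ) :
    LinearMap.ker (deltaIter k C 𝒞 D (n + 1)) = LinearMap.ker (proj 𝒞 (n + 1)) := by
  induction n with
  | zero => exact (LinearMap.ker_comp_of_ker_eq_bot _ (Submodule.ker_subtype _)).symm
  | succ n ih =>
    have h := hD.ker_comulOneExtend ih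
    rwa [D.comulOneExtend_deltaIter] at h

lemma lTensor_comulOneExtend_eq_iff {D : GradedCoalgebraData k C 𝒞} (hD : D.Strong) {n : ℕ}
    {f : C →ₗ[k] W} (hf : LinearMap.ker f = LinearMap.ker (proj 𝒞 n)) {u v : ↥(𝒞 1) ⊗[k] C} :
    (comulOneExtend (𝒞 := 𝒞) f).lTensor ↥(𝒞 1) u = (comulOneExtend f).lTensor ↥(𝒞 1) v ↔
      (proj 𝒞 (n + 1)).lTensor ↥(𝒞 1) u = (proj 𝒞 (n + 1)).lTensor ↥(𝒞 1) v := by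
  rw [← sub_eq_zero, ← map_sub, ← LinearMap.mem_ker,
    ker_lTensor_congr _ (hD.ker_comulOneExtend hf), LinearMap.mem_ker, map_sub, sub_eq_zero]

end Strong

lemma lTensor_comulOneExtend_mem_relationsInter_iff (D : GradedCoalgebraData k C 𝒞) {n : ℕ}
    {f : C →ₗ[k] W} (hf : LinearMap.ker f = LinearMap.ker (proj 𝒞 n)) {u : ↥(𝒞 1) ⊗[k] C} :
    (comulOneExtend f).lTensor ↥(𝒞 1) u ∈ D.relationsInter (LinearMap.range (comulOneExtend f)) ↔
      (proj 𝒞 (n + 1)).lTensor ↥(𝒞 1) u ∈ LinearMap.ker D.quadDiff := by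
  have hmem : (comulOneExtend f).lTensor ↥(𝒞 1) u ∈
      LinearMap.range ((LinearMap.range (comulOneExtend (𝒞 := 𝒞) f)).subtype.lTensor ↥(𝒞 1)) := by
    rw [← LinearMap.lTensor_range]
    exact LinearMap.mem_range_self _ u
  rw [relationsInter, Submodule.mem_inf, and_iff_left hmem, Submodule.mem_map_equiv,
    mem_range_rTensor_subtype_iff, D.rTensor_mkQ_lTensor_comulOneExtend, ← LinearMap.mem_ker,
    ker_lTensor_congr _ hf, LinearMap.mem_ker, LinearMap.mem_ker, D.quadDiff_lTensor_proj_succ]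

namespace Strong

lemma relationsInter_range_comulOneExtend_iff {D : GradedCoalgebraData k C 𝒞} (hD : D.Strong)
    {n : ℕ} {f : C →ₗ[k] W} (hf : LinearMap.ker f = LinearMap.ker (proj 𝒞 n)) :
    D.relationsInter (LinearMap.range (comulOneExtend f)) =
      LinearMap.range (comulOneExtend (comulOneExtend f)) ↔ D.ExactInDegree (n + 1) := by
  have hproj : ∀ u : ↥(𝒞 1) ⊗[k] C, (proj 𝒞 (n + 1)).lTensor ↥(𝒞 1)
      ((proj 𝒞 (n + 1)).lTensor ↥(𝒞 1) u) = (proj 𝒞 (n + 1)).lTensor ↥(𝒞 1) u := fun u => by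
    rw [← LinearMap.lTensor_comp_apply, proj_comp_proj]
  constructor
  · intro heq u hu
    have hpu : (proj 𝒞 (n + 1)).lTensor ↥(𝒞 1) u ∈ LinearMap.ker D.quadDiff := by
      rw [LinearMap.mem_ker, D.quadDiff_lTensor_proj_succ, LinearMap.mem_ker.1 hu, map_zero]
    obtain ⟨x, hx⟩ := heq.le ((D.lTensor_comulOneExtend_mem_relationsInter_iff hf).2 hpu)
    exact ⟨proj 𝒞 (n + 2) x,
      (D.comulOne_proj_succ _ x).trans ((hD.lTensor_comulOneExtend_eq_iff hf).1 hx)⟩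
  · refine fun hexact => le_antisymm (fun w hw => ?_) ?_
    · obtain ⟨u, rfl⟩ : w ∈ LinearMap.range ((comulOneExtend f).lTensor ↥(𝒞 1)) := by
        rw [LinearMap.lTensor_range]
        exact hw.2
      obtain ⟨x, hx⟩ := hexact ((D.lTensor_comulOneExtend_mem_relationsInter_iff hf).1 hw)
      refine ⟨x, (hD.lTensor_comulOneExtend_eq_iff hf).2 ?_⟩
      rw [hx, hproj, hproj]
    · rintro _ ⟨x, rfl⟩
      refine (D.lTensor_comulOneExtend_mem_relationsInter_iff hf).2 ?_
      rw [← D.comulOne_proj_succ, LinearMap.mem_ker, D.quadDiff_comulOne]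

lemma relationsInter_range_deltaIter_iff {D : GradedCoalgebraData k C 𝒞} (hD : D.Strong)
    (n : ℕ) :
    D.relationsInter (W := ↥(TP k ↥(𝒞 1) (n + 1))) (LinearMap.range (deltaIter k C 𝒞 D (n + 2))) =
      LinearMap.range (deltaIter k C 𝒞 D (n + 3)) ↔ D.ExactInDegree (n + 2) := by
  have h := hD.relationsInter_range_comulOneExtend_iff (hD.ker_deltaIter n)
  rw [D.comulOneExtend_deltaIter] at h
  exact (Eq.congr rfl (congrArg LinearMap.range (D.comulOneExtend_deltaIter (n + 1)).symm)).trans h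

lemma coalgQuadratic_iff {D : GradedCoalgebraData k C 𝒞} (hD : D.Strong) :
    CoalgQuadratic k C 𝒞 D ↔ ∀ n, D.ExactInDegree (n + 2) := by
  have hinj : ∀ j, ∀ x ∈ 𝒞 (j + 2), deltaIter k C 𝒞 D (j + 2) x = 0 → x = 0 := fun j x hx h => by
    rw [← proj_of_mem hx]
    exact (hD.ker_deltaIter (j + 1)).le h
  have hquad : CoalgQuadratic k C 𝒞 D ↔
      ∀ j, LinearMap.range (deltaIter k C 𝒞 D (j + 2)) = Ctilde k C 𝒞 D j :=
    forall_congr' fun j => by rw [and_iff_right (hinj j), D.map_deltaIter]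
  refine hquad.trans ⟨fun h j => ?_, fun hexact j => ?_⟩
  · exact (hD.relationsInter_range_deltaIter_iff j).1
      ((congrArg _ (h j)).trans ((D.relationsInter_Ctilde j).trans (h (j + 1)).symm))
  · induction j with
    | zero => exact D.Ctilde_zero.symm
    | succ j ih =>
      exact ((hD.relationsInter_range_deltaIter_iff j).2 (hexact j)).symm.trans
        ((congrArg _ ih).trans (D.relationsInter_Ctilde j))

end Strong
end GradedCoalgebraData
end Quadratic

/-- **Statement 16.** A connected strongly graded `k`-coalgebra `C` is quadratic if and
only if `Ext_C^{2,m}(k,k) = 0` for all `m ≥ 3`. -/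
theorem statement16 (D : GradedCoalgebraData k C 𝒞) (hstrong : D.Strong) :
    CoalgQuadratic k C 𝒞 D ↔
      ∀ m : ℕ, 3 ≤ m → Subsingleton (ExtGrp k C 𝒞 (deltaPlus k C D.g) 2 m) := by
  rw [hstrong.coalgQuadratic_iff]
  constructor
  · intro hexact m hm
    obtain ⟨n, rfl⟩ := Nat.exists_eq_add_of_le' hm
    exact hstrong.subsingleton_extGrp_two (hexact n)
  · intro hext n
    suffices ∀ N, D.ExactInDegree N from this (n + 2)
    intro N
    induction N using Nat.strong_induction_on with
    | _ N ih =>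
      match N with
      | 0 => exact D.exactInDegree_zero
      | 1 => exact D.exactInDegree_one
      | N + 2 =>
        exact hstrong.exactInDegree_succ (fun p hp => ih p (by omega)) (hext (N + 3) (by omega))

end Koszul
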